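/- Let X ∈ ℝ^{B×d} have all rows of ℓ² norm √d, let W_Q, W_K, W_V, W_O ∈ ℝ^{d×d}, and let x, x' ∈ ℝ^d be row vectors. Set q = x W_Q, q' = x' W_Q, K = X W_K, and V = X W_V. Then ‖( softmax(q Kᵀ / √d) − softmax(q' Kᵀ / √d) ) V W_O‖₂ ≤ B √d · ‖W_O‖_F ‖W_V‖_F ‖W_K‖_F ‖W_Q‖_F · ‖x − x'‖₂. -/

import Mathlib

/-!
Each softmax coordinate is 1-Lipschitz with respect to the sup norm of the logits
(`softmax_sub_le`).  Writing `p`, `p'` for the two values of a coordinate, `u = p (1 - p')` and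
`w = p' (1 - p)`, one has `p - p' = u - w` and `u + w ≤ 1`.  If the logits differ by at most `D`,
then the odds ratio satisfies `u ≤ exp (2 D) w`, so `u - w ≤ tanh D ≤ D`.

Since the rows of `X` have norm `√d`, the Cauchy–Schwarz inequality and the bound
`‖v W‖₂ ≤ ‖v‖₂ ‖W‖_F` (`l2_vecMul_le`) show that each logit moves by at most
`‖W_K‖_F ‖W_Q‖_F ‖x - x'‖₂`: the `√d` from the row of `X` cancels the scaling.  The triangle
inequality over the `B` rows of `X` (`l2_vecMul_le_sum`) then produces the factor `B √d`, and
`W_V`, `W_O` contribute their Frobenius norms.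
-/

open scoped BigOperators
open Matrix

/-- Softmax of a vector. -/
noncomputable def softmax {n : ℕ} (z : Fin n → ℝ) : Fin n → ℝ :=
  fun j => Real.exp (z j) / ∑ k, Real.exp (z k)

/-- ℓ¹ norm. -/
noncomputable def l1 {n : ℕ} (v : Fin n → ℝ) : ℝ := ∑ j, |v j|

/-- ℓ² (Euclidean) norm. -/
noncomputable def l2 {n : ℕ} (v : Fin n → ℝ) : ℝ := Real.sqrt (∑ j, v j ^ 2)

/-- ℓ^∞ norm. -/
noncomputable def linf {n : ℕ} (v : Fin n → ℝ) : ℝ := ⨆ j, |v j|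

/-- Spectral norm (operator ℓ²→ℓ² norm) of a matrix acting on row vectors. -/
noncomputable def spec {m n : ℕ} (W : Matrix (Fin m) (Fin n) ℝ) : ℝ :=
  sSup {c | ∃ x : Fin m → ℝ, l2 x ≤ 1 ∧ c = l2 (x ᵥ* W)}

/-- Frobenius norm of a matrix. -/
noncomputable def frob {m n : ℕ} (W : Matrix (Fin m) (Fin n) ℝ) : ℝ :=
  Real.sqrt (∑ i, ∑ j, W i j ^ 2)

/-- Operator norm of `h ↦ h Eᵀ` from ℓ² to ℓ¹. -/
noncomputable def opNorm21 {m d : ℕ} (E : Matrix (Fin m) (Fin d) ℝ) : ℝ :=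
  sSup {c | ∃ h : Fin d → ℝ, l2 h ≤ 1 ∧ c = l1 (h ᵥ* Eᵀ)}

/-- Operator norm of `h ↦ h Eᵀ` from ℓ² to ℓ^∞. -/
noncomputable def opNorm2inf {m d : ℕ} (E : Matrix (Fin m) (Fin d) ℝ) : ℝ :=
  sSup {c | ∃ h : Fin d → ℝ, l2 h ≤ 1 ∧ c = linf (h ᵥ* Eᵀ)}

/-- Condition number `κ(W) = σ_max(W)/σ_min(W)` of an invertible matrix,
expressed as `σ_max(W) · σ_max(W⁻¹)`. -/
noncomputable def condNum {d : ℕ} (W : Matrix (Fin d) (Fin d) ℝ) : ℝ := spec W * spec W⁻¹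

lemma l2_nonneg {n : ℕ} (v : Fin n → ℝ) : 0 ≤ l2 v := Real.sqrt_nonneg _

lemma frob_nonneg {m n : ℕ} (W : Matrix (Fin m) (Fin n) ℝ) : 0 ≤ frob W := Real.sqrt_nonneg _

lemma frob_transpose {m n : ℕ} (W : Matrix (Fin m) (Fin n) ℝ) : frob Wᵀ = frob W := by
  unfold frob
  rw [Finset.sum_comm]
  rfl

lemma l2_eq_norm {n : ℕ} (v : Fin n → ℝ) : l2 v = ‖WithLp.toLp 2 v‖ := by
  simp [l2, EuclideanSpace.norm_eq]

lemma abs_dotProduct_le {n : ℕ} (v w : Fin n → ℝ) : |v ⬝ᵥ w| ≤ l2 v * l2 w := by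
  unfold l2
  rw [← Real.sqrt_mul (Finset.sum_nonneg fun _ _ => sq_nonneg _)]
  exact Real.abs_le_sqrt (Finset.sum_mul_sq_le_sq_mul_sq _ _ _)

lemma l2_vecMul_le {m n : ℕ} (v : Fin m → ℝ) (W : Matrix (Fin m) (Fin n) ℝ) :
    l2 (v ᵥ* W) ≤ l2 v * frob W := by
  unfold l2 frob
  rw [← Real.sqrt_mul (Finset.sum_nonneg fun _ _ => sq_nonneg _)]
  apply Real.sqrt_le_sqrt
  rw [Finset.sum_comm, Finset.mul_sum]
  exact Finset.sum_le_sum fun j _ => Finset.sum_mul_sq_le_sq_mul_sq Finset.univ v fun i => W i j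

/-- Triangle inequality for a linear combination of the rows of a matrix. -/
lemma l2_vecMul_le_sum {m n : ℕ} (v : Fin m → ℝ) (X : Matrix (Fin m) (Fin n) ℝ) :
    l2 (v ᵥ* X) ≤ ∑ i, |v i| * l2 (X i) := by
  have h : WithLp.toLp 2 (v ᵥ* X) = ∑ i, v i • WithLp.toLp 2 (X i) := by
    ext j
    simp [Matrix.vecMul, dotProduct]
  rw [l2_eq_norm, h]
  refine (norm_sum_le _ _).trans (le_of_eq ?_)
  exact Finset.sum_congr rfl fun i _ => by rw [norm_smul, Real.norm_eq_abs, l2_eq_norm]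

/-- `tanh D ≤ D`, in terms of `exp (2 D)`. -/
lemma exp_two_mul_sub_one_le {D : ℝ} (hD : 0 ≤ D) :
    Real.exp (2 * D) - 1 ≤ D * (Real.exp (2 * D) + 1) := by
  have hE : 1 ≤ Real.exp (2 * D) := Real.one_le_exp (by linarith)
  have h := Real.le_log_one_add_of_nonneg (x := Real.exp (2 * D) - 1) (by linarith)
  rw [add_sub_cancel, Real.log_exp, div_le_iff₀ (by linarith)] at h
  linarith

/-- One-sided form of the statement that a softmax coordinate is 1-Lipschitz for the sup norm. -/
lemma softmax_sub_le {n : ℕ} (z z' : Fin n → ℝ) {D : ℝ} (hz : ∀ k, |z k - z' k| ≤ D)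
    (j : Fin n) : softmax z j - softmax z' j ≤ D := by
  have hD : 0 ≤ D := (abs_nonneg _).trans (hz j)
  have hle : Real.exp (z j) ≤ Real.exp D * Real.exp (z' j) := by
    rw [← Real.exp_add]
    exact Real.exp_le_exp.2 (by linarith [(abs_le.1 (hz j)).2])
  have hle' : ∀ k, Real.exp (z' k) ≤ Real.exp D * Real.exp (z k) := fun k => by
    rw [← Real.exp_add]
    exact Real.exp_le_exp.2 (by linarith [(abs_le.1 (hz k)).1])
  -- `b` and `b'` are the partition sums with the `j`-th term removed.
  obtain ⟨b, hb⟩ : ∃ b, b = ∑ k ∈ Finset.univ.erase j, Real.exp (z k) := ⟨_, rfl⟩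
  obtain ⟨b', hb'⟩ : ∃ b', b' = ∑ k ∈ Finset.univ.erase j, Real.exp (z' k) := ⟨_, rfl⟩
  have hS : ∑ k, Real.exp (z k) = Real.exp (z j) + b := by
    rw [hb, Finset.add_sum_erase _ (fun k => Real.exp (z k)) (Finset.mem_univ j)]
  have hS' : ∑ k, Real.exp (z' k) = Real.exp (z' j) + b' := by
    rw [hb', Finset.add_sum_erase _ (fun k => Real.exp (z' k)) (Finset.mem_univ j)]
  have hb0 : 0 ≤ b := hb ▸ Finset.sum_nonneg fun _ _ => (Real.exp_pos _).le
  have hb0' : 0 ≤ b' := hb' ▸ Finset.sum_nonneg fun _ _ => (Real.exp_pos _).le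
  have hbb : b' ≤ Real.exp D * b := by
    rw [hb, hb', Finset.mul_sum]
    exact Finset.sum_le_sum fun k _ => hle' k
  have hE := exp_two_mul_sub_one_le hD
  have hE1 : 1 ≤ Real.exp (2 * D) := Real.one_le_exp (by linarith)
  have hEE : Real.exp (2 * D) = Real.exp D * Real.exp D := by rw [two_mul, Real.exp_add]
  unfold softmax
  rw [hS, hS']
  have ha := Real.exp_pos (z j)
  have ha' := Real.exp_pos (z' j)
  generalize Real.exp (z j) = a at *
  generalize Real.exp (z' j) = a' at *
  have hodds : a * b' ≤ Real.exp (2 * D) * (a' * b) := by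
    calc a * b' ≤ (Real.exp D * a') * (Real.exp D * b) := by gcongr
      _ = Real.exp (2 * D) * (a' * b) := by rw [hEE]; ring
  generalize Real.exp (2 * D) = E at *
  rw [div_sub_div _ _ (by positivity) (by positivity), div_le_iff₀ (by positivity)]
  have hu : 0 ≤ a * b' := by positivity
  have hw : 0 ≤ a' * b := by positivity
  have key : a * b' - a' * b ≤ D * (a * b' + a' * b) := by
    have h1 : (a * b' - a' * b) * (E + 1) ≤ (a * b' + a' * b) * (E - 1) := by linarith
    have h2 : (a * b' + a' * b) * (E - 1) ≤ (a * b' + a' * b) * (D * (E + 1)) := by gcongr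
    refine le_of_mul_le_mul_right (a := E + 1) ?_ (by linarith)
    linarith
  have h3 : D * (a * b' + a' * b) ≤ D * ((a + b) * (a' + b')) := by
    gcongr
    nlinarith [mul_pos ha ha', mul_nonneg hb0 hb0']
  linarith

lemma abs_softmax_sub_le {n : ℕ} (z z' : Fin n → ℝ) {D : ℝ} (hz : ∀ k, |z k - z' k| ≤ D)
    (j : Fin n) : |softmax z j - softmax z' j| ≤ D := by
  refine abs_sub_le_iff.2 ⟨softmax_sub_le z z' hz j, softmax_sub_le z' z (fun k => ?_) j⟩
  rw [abs_sub_comm]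
  exact hz k

/-- stale-query softmax perturbation bound:
`‖(softmax(qKᵀ/√d) − softmax(q'Kᵀ/√d)) V W_O‖₂
  ≤ B√d·‖W_O‖_F‖W_V‖_F‖W_K‖_F‖W_Q‖_F·‖x − x'‖₂` with `q = xW_Q`, `q' = x'W_Q`. -/
theorem stale_query_softmax_bound {B d : ℕ}
    (X : Matrix (Fin B) (Fin d) ℝ) (hX : ∀ i, l2 (X i) = Real.sqrt d)
    (WQ WK WV WO : Matrix (Fin d) (Fin d) ℝ)
    (x x' : Fin d → ℝ) :
    l2 (((fun j =>
          softmax (fun j' => ((x ᵥ* WQ) ᵥ* (X * WK)ᵀ) j' / Real.sqrt d) j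
        - softmax (fun j' => ((x' ᵥ* WQ) ᵥ* (X * WK)ᵀ) j' / Real.sqrt d) j)
        ᵥ* (X * WV)) ᵥ* WO)
    ≤ B * Real.sqrt d * frob WO * frob WV * frob WK * frob WQ
        * l2 (fun k => x k - x' k) := by
  have hlogit : ∀ k, |((x ᵥ* WQ) ᵥ* (X * WK)ᵀ) k / Real.sqrt d
      - ((x' ᵥ* WQ) ᵥ* (X * WK)ᵀ) k / Real.sqrt d|
      ≤ l2 (fun k => x k - x' k) * frob WQ * frob WK := fun k => by
    have h : ((x ᵥ* WQ) ᵥ* (X * WK)ᵀ) k - ((x' ᵥ* WQ) ᵥ* (X * WK)ᵀ) k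
        = (((fun k => x k - x' k) ᵥ* WQ) ᵥ* WKᵀ) ⬝ᵥ X k := by
      have e : (fun k => x k - x' k) = x - x' := rfl
      rw [← Pi.sub_apply, ← Matrix.sub_vecMul, ← Matrix.sub_vecMul, e, Matrix.transpose_mul,
        ← Matrix.vecMul_vecMul]
      rfl
    have h1 := l2_vecMul_le ((fun k => x k - x' k) ᵥ* WQ) WKᵀ
    rw [frob_transpose] at h1
    have h2 := l2_vecMul_le (fun k => x k - x' k) WQ
    have hbound : l2 (((fun k => x k - x' k) ᵥ* WQ) ᵥ* WKᵀ)
        ≤ l2 (fun k => x k - x' k) * frob WQ * frob WK :=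
      h1.trans (mul_le_mul_of_nonneg_right h2 (frob_nonneg _))
    rw [← sub_div, abs_div, abs_of_nonneg (Real.sqrt_nonneg (d : ℝ)), h]
    -- This division lemma also covers `d = 0`, where the quotient is `0`.
    refine div_le_of_le_mul₀ (Real.sqrt_nonneg _) ((l2_nonneg _).trans hbound) ?_
    refine (abs_dotProduct_le _ _).trans ?_
    rw [hX]
    exact mul_le_mul_of_nonneg_right hbound (Real.sqrt_nonneg _)
  have hsm := abs_softmax_sub_le
    (fun j' => ((x ᵥ* WQ) ᵥ* (X * WK)ᵀ) j' / Real.sqrt d)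
    (fun j' => ((x' ᵥ* WQ) ᵥ* (X * WK)ᵀ) j' / Real.sqrt d) hlogit
  rw [← Matrix.vecMul_vecMul]
  refine (l2_vecMul_le _ _).trans ?_
  refine (mul_le_mul_of_nonneg_right (l2_vecMul_le _ _) (frob_nonneg _)).trans ?_
  have hrows := (l2_vecMul_le_sum (fun j =>
      softmax (fun j' => ((x ᵥ* WQ) ᵥ* (X * WK)ᵀ) j' / Real.sqrt d) j
    - softmax (fun j' => ((x' ᵥ* WQ) ᵥ* (X * WK)ᵀ) j' / Real.sqrt d) j) X).trans
    (Finset.sum_le_sum fun j _ =>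
      mul_le_mul (hsm j) (hX j).le (l2_nonneg _) ((abs_nonneg _).trans (hsm j)))
  rw [Finset.sum_const, Finset.card_univ, Fintype.card_fin, nsmul_eq_mul] at hrows
  refine (mul_le_mul_of_nonneg_right (mul_le_mul_of_nonneg_right hrows (frob_nonneg _))
    (frob_nonneg _)).trans (le_of_eq ?_)
  ring
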